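/- Let D ≥ 1, let ψ := (1/√D) Σ_{i=1}^D e_i ⊗ e_i ∈ ℂ^D ⊗ ℂ^D be the maximally entangled state, and let H, K be D×D traceless Hermitian complex matrices. Define φ_H := (H ⊗ I + I ⊗ H)ψ and φ_K := (K ⊗ I + I ⊗ K)ψ. Then the complex number ⟨φ_H, φ_K⟩ − ⟨φ_H, ψ⟩⟨ψ, φ_K⟩ is real. (Hence for the double-encoding ψ_θ = (U_θ ⊗ U_θ)ψ of a maximally entangled probe, the mean-commutator matrix vanishes, A_{lm}(θ) = 0, giving full compatibility ℐ(θ) = 0 for all θ.) -/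

import Mathlib

open Matrix
open scoped Kronecker

/-- The maximally entangled state `ψ = (1/√D) Σᵢ eᵢ ⊗ eᵢ` of `ℂ^D ⊗ ℂ^D`,
as a vector indexed by `Fin D × Fin D`. -/
noncomputable def maxEnt (D : ℕ) : Fin D × Fin D → ℂ :=
  fun p => if p.1 = p.2 then (((Real.sqrt D)⁻¹ : ℝ) : ℂ) else 0

/-- `φ_H = (H ⊗ I + I ⊗ H) ψ` for the maximally entangled state `ψ`. -/
noncomputable def doubleTangent (D : ℕ) (H : Matrix (Fin D) (Fin D) ℂ) :
    Fin D × Fin D → ℂ :=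
  (H ⊗ₖ (1 : Matrix (Fin D) (Fin D) ℂ) + (1 : Matrix (Fin D) (Fin D) ℂ) ⊗ₖ H).mulVec (maxEnt D)

/-! Under vectorization `ψ = (√D)⁻¹ • vec 1`, and moving the second tensor factor across `ψ` by
transposition gives `φ_H = (√D)⁻¹ • vec (H + Hᵀ)`. For Hermitian `H` the matrix `H + Hᵀ = H + H̄` has
real entries, so `ψ`, `φ_H` and `φ_K` all lie in the same real form of `ℂ^D ⊗ ℂ^D`, on which the
inner product is real. -/

theorem isSelfAdjoint_dotProduct {n R : Type*} [Fintype n] [NonUnitalCommSemiring R] [StarRing R]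
    {v w : n → R} (hv : IsSelfAdjoint v) (hw : IsSelfAdjoint w) : IsSelfAdjoint (v ⬝ᵥ w) := by
  rw [isSelfAdjoint_iff, ← star_dotProduct_star, hv.star_eq, hw.star_eq, dotProduct_comm]

theorem isSelfAdjoint_vec {n R : Type*} [Star R] {A : Matrix n n R}
    (hherm : A.IsHermitian) (hsymm : A.IsSymm) : IsSelfAdjoint (vec A) :=
  calc
    star (vec A) = vec Aᴴᵀ := by rw [star_vec, conjTranspose_transpose]
    _ = vec A := by rw [hherm.eq, hsymm.eq]

theorem maxEnt_eq_smul_vec_one (D : ℕ) :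
    maxEnt D = (√D)⁻¹ • vec (1 : Matrix (Fin D) (Fin D) ℂ) := by
  ext ⟨i, j⟩
  simp [maxEnt, one_apply, eq_comm]

theorem doubleTangent_eq_smul_vec_add_transpose (D : ℕ) (H : Matrix (Fin D) (Fin D) ℂ) :
    doubleTangent D H = (√D)⁻¹ • vec (H + Hᵀ) := by
  have kronecker_one : (H ⊗ₖ 1) *ᵥ vec (1 : Matrix (Fin D) (Fin D) ℂ) = vec Hᵀ := by
    rw [kronecker_mulVec_vec, one_mul, one_mul]
  have one_kronecker : (1 ⊗ₖ H) *ᵥ vec (1 : Matrix (Fin D) (Fin D) ℂ) = vec H := by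
    rw [kronecker_mulVec_vec, transpose_one, mul_one, mul_one]
  rw [doubleTangent, maxEnt_eq_smul_vec_one, mulVec_smul, add_mulVec, kronecker_one,
    one_kronecker, ← vec_add, add_comm]

theorem isSelfAdjoint_maxEnt (D : ℕ) : IsSelfAdjoint (maxEnt D) := by
  rw [maxEnt_eq_smul_vec_one]
  exact (IsSelfAdjoint.all _).smul (isSelfAdjoint_vec isHermitian_one isSymm_one)

theorem isSelfAdjoint_doubleTangent {D : ℕ} {H : Matrix (Fin D) (Fin D) ℂ}
    (hH : H.IsHermitian) : IsSelfAdjoint (doubleTangent D H) := by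
  rw [doubleTangent_eq_smul_vec_add_transpose]
  exact (IsSelfAdjoint.all _).smul
    (isSelfAdjoint_vec (hH.add hH.transpose) (isSymm_add_transpose_self H))

theorem maximally_entangled_double_encoding_compatibility_general (D : ℕ)
    (H K : Matrix (Fin D) (Fin D) ℂ) (hH : H.IsHermitian) (hK : K.IsHermitian) :
    (star (doubleTangent D H) ⬝ᵥ doubleTangent D K -
        (star (doubleTangent D H) ⬝ᵥ maxEnt D) * (star (maxEnt D) ⬝ᵥ doubleTangent D K)).im
      = 0 := by
  have hψ := isSelfAdjoint_maxEnt D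
  have hφH := isSelfAdjoint_doubleTangent hH
  have hφK := isSelfAdjoint_doubleTangent hK
  rw [hφH.star_eq, hψ.star_eq]
  exact Complex.conj_eq_iff_im.mp <| (isSelfAdjoint_dotProduct hφH hφK).sub <|
    (isSelfAdjoint_dotProduct hφH hψ).mul (isSelfAdjoint_dotProduct hψ hφK)

theorem maximally_entangled_double_encoding_compatibility (D : ℕ) (hD : 1 ≤ D)
    (H K : Matrix (Fin D) (Fin D) ℂ)
    (hH : H.IsHermitian) (hK : K.IsHermitian)
    (hH0 : H.trace = 0) (hK0 : K.trace = 0) :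
    (star (doubleTangent D H) ⬝ᵥ doubleTangent D K -
        (star (doubleTangent D H) ⬝ᵥ maxEnt D) * (star (maxEnt D) ⬝ᵥ doubleTangent D K)).im
      = 0 :=
  maximally_entangled_double_encoding_compatibility_general D H K hH hK
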